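/- Let m, n be positive integers and let μ be a finite Borel measure on ℝ² with compact support contained in [0,∞)×[0,∞). If ∫ s^{k₁} t^{k₂} (t^m − s^n) dμ(s,t) = 0 for all k₁, k₂ ∈ ℕ, then t^m = s^n for μ-almost every (s,t); equivalently, μ({(s,t) : t^m ≠ s^n}) = 0. -/

import Mathlib

open MeasureTheory

/-- The (topological) support of a Borel measure: the set of points all of whose
open neighborhoods have positive measure. -/
def msupp {X : Type*} [TopologicalSpace X] [MeasurableSpace X] (μ : Measure X) : Set X :=
  {x | ∀ U : Set X, IsOpen U → x ∈ U → 0 < μ U}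

/-!
Let `p = t^m - s^n`. Vanishing moments make `p` orthogonal in `L²(μ)` to the monomials of `p`, hence
to `p` itself, so `∫ p² ∂μ = 0`. No density of polynomials is needed.
-/

lemma msupp_eq_support {X : Type*} [TopologicalSpace X] [MeasurableSpace X] (μ : Measure X) :
    msupp μ = μ.support := by
  rw [Measure.support_eq_forall_isOpen]
  exact Set.ext fun _ ↦ forall_congr' fun _ ↦ forall_comm

lemma integrable_of_continuousOn_of_isCompact_support {X E : Type*} [TopologicalSpace X]
    [HereditarilyLindelofSpace X] [MeasurableSpace X] [OpensMeasurableSpace X]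
    [NormedAddCommGroup E] [SecondCountableTopologyEither X E]
    {μ : Measure X} [IsFiniteMeasureOnCompacts μ] {f : X → E}
    (hμ : IsCompact μ.support) (hf : ContinuousOn f μ.support) : Integrable f μ := by
  have hrestrict : μ.restrict μ.support = μ := Measure.restrict_eq_self_of_ae_mem μ.support_mem_ae
  rw [← hrestrict]
  exact hf.integrableOn_compact' hμ μ.isClosed_support.measurableSet

section Moments

open MvPolynomial

lemma sq_eq_sum_C_coeff_mul_monomial_mul {R σ : Type*} [CommSemiring R] (p : MvPolynomial σ R) :
    p ^ 2 = ∑ k ∈ p.support, C (p.coeff k) * (monomial k 1 * p) := by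
  calc p ^ 2 = (∑ k ∈ p.support, monomial k (p.coeff k)) * p := by rw [← p.as_sum, sq]
    _ = ∑ k ∈ p.support, C (p.coeff k) * (monomial k 1 * p) := by
      simp only [Finset.sum_mul, ← mul_assoc, C_mul_monomial, mul_one]

theorem stmt_3_general {α σ : Type*} [MeasurableSpace α] {μ : Measure α} {x : α → σ → ℝ}
    {p : MvPolynomial σ ℝ}
    (hint : ∀ k ∈ p.support, Integrable (fun ω ↦ eval (x ω) (monomial k 1 * p)) μ)
    (hmom : ∀ k ∈ p.support, ∫ ω, eval (x ω) (monomial k 1 * p) ∂μ = 0) :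
    ∀ᵐ ω ∂μ, eval (x ω) p = 0 := by
  have hsq (ω : α) : eval (x ω) p ^ 2 =
      ∑ k ∈ p.support, p.coeff k * eval (x ω) (monomial k 1 * p) := by
    simpa only [map_pow, map_sum, map_mul, eval_C] using
      congrArg (eval (x ω)) (sq_eq_sum_C_coeff_mul_monomial_mul p)
  have hterm : ∀ k ∈ p.support,
      Integrable (fun ω ↦ p.coeff k * eval (x ω) (monomial k 1 * p)) μ :=
    fun k hk ↦ (hint k hk).const_mul _
  have hsq_int : Integrable (fun ω ↦ eval (x ω) p ^ 2) μ := by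
    simpa only [hsq] using integrable_finsetSum _ hterm
  have hsq_zero : ∫ ω, eval (x ω) p ^ 2 ∂μ = 0 := by
    calc ∫ ω, eval (x ω) p ^ 2 ∂μ
        = ∑ k ∈ p.support, ∫ ω, p.coeff k * eval (x ω) (monomial k 1 * p) ∂μ := by
          simp only [hsq, integral_finsetSum _ hterm]
      _ = 0 := Finset.sum_eq_zero fun k hk ↦ by rw [integral_const_mul, hmom k hk, mul_zero]
  filter_upwards [(integral_eq_zero_iff_of_nonneg (fun _ ↦ sq_nonneg _) hsq_int).mp hsq_zero]
    with ω hω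
  exact sq_eq_zero_iff.mp hω

end Moments

/-- If all moments of a compactly supported finite measure on `ℝ₊²` against the
polynomial `t^m - s^n` vanish, then the measure is supported on the curve `t^m = s^n`. -/
theorem stmt_3 (m n : ℕ) (hm : 1 ≤ m) (hn : 1 ≤ n)
    (μ : Measure (ℝ × ℝ)) [IsFiniteMeasure μ]
    (hcompact : IsCompact (msupp μ))
    (hsupp : msupp μ ⊆ Set.Ici (0 : ℝ) ×ˢ Set.Ici (0 : ℝ))
    (hmom : ∀ k₁ k₂ : ℕ, ∫ x : ℝ × ℝ, x.1 ^ k₁ * x.2 ^ k₂ * (x.2 ^ m - x.1 ^ n) ∂μ = 0) :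
    μ {x : ℝ × ℝ | x.2 ^ m ≠ x.1 ^ n} = 0 := by
  rw [msupp_eq_support] at hcompact
  let p : MvPolynomial (Fin 2) ℝ := .X 1 ^ m - .X 0 ^ n
  have hcurve : ∀ᵐ x : ℝ × ℝ ∂μ, p.eval ![x.1, x.2] = 0 := by
    refine stmt_3_general (fun k _ ↦ ?_) fun k _ ↦ ?_
    · exact integrable_of_continuousOn_of_isCompact_support hcompact
        ((MvPolynomial.continuous_eval _).comp_continuousOn (by fun_prop))
    · simpa [p, MvPolynomial.eval_monomial, Finsupp.prod_fintype] using hmom (k 0) (k 1)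
  simpa [p, sub_eq_zero, ae_iff] using hcurve
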